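/- If A is a set of nonnegative integers such that A ∪ S is an asymptotic nonbasis of order 2 for every finite set S of nonnegative integers disjoint from A, then A is contained in a maximal asymptotic nonbasis of order 2. -/

import Mathlib

open Pointwise Filter

/-- The counting function of a set of nonnegative integers: the number of
positive elements of `A` that are at most `n`. -/
noncomputable def countingFn (A : Set ℕ) (n : ℕ) : ℕ := (A ∩ Set.Icc 1 n).ncard

/-- The Shnirel'man density `σ(A) = inf_{n ≥ 1} A(n)/n`. -/
noncomputable def shnirelmanDensity (A : Set ℕ) : ℝ :=
  ⨅ n : {n : ℕ // 0 < n}, (countingFn A (n : ℕ) : ℝ) / ((n : ℕ) : ℝ)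

/-- The lower asymptotic density `d_L(A) = liminf_{n → ∞} A(n)/n`. -/
noncomputable def lowerDensity (A : Set ℕ) : ℝ :=
  liminf (fun n : ℕ => (countingFn A n : ℝ) / (n : ℝ)) atTop

/-- `A` is an additive basis of order `h`: every nonnegative integer is the
sum of exactly `h` elements of `A` (with repetitions allowed). -/
def IsBasisOfOrder (A : Set ℕ) (h : ℕ) : Prop :=
  ∀ n : ℕ, ∃ c : Fin h → ℕ, (∀ i, c i ∈ A) ∧ ∑ i, c i = n

/-- `A` is an asymptotic basis of order `h`: every sufficiently large integer
is the sum of exactly `h` elements of `A` (with repetitions allowed). -/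
def IsAsymptoticBasisOfOrder (A : Set ℕ) (h : ℕ) : Prop :=
  ∀ᶠ n : ℕ in atTop, ∃ c : Fin h → ℕ, (∀ i, c i ∈ A) ∧ ∑ i, c i = n

/-- A minimal asymptotic basis of order `h` is an asymptotic basis of order `h`
no proper subset of which is an asymptotic basis of order `h`. -/
def IsMinimalAsymptoticBasisOfOrder (A : Set ℕ) (h : ℕ) : Prop :=
  IsAsymptoticBasisOfOrder A h ∧
    ∀ B : Set ℕ, B ⊂ A → ¬ IsAsymptoticBasisOfOrder B h

/-- A maximal asymptotic nonbasis of order `h` is a set that is not an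
asymptotic basis of order `h`, but such that adjoining any element outside it
produces an asymptotic basis of order `h`. -/
def IsMaximalAsymptoticNonbasisOfOrder (A : Set ℕ) (h : ℕ) : Prop :=
  ¬ IsAsymptoticBasisOfOrder A h ∧
    ∀ b : ℕ, b ∉ A → IsAsymptoticBasisOfOrder (A ∪ {b}) h

theorem isAsymptoticBasisOfOrder_two_iff (B : Set ℕ) :
    IsAsymptoticBasisOfOrder B 2 ↔ ∃ N, ∀ m ≥ N, m ∈ B + B := by
  simp only [IsAsymptoticBasisOfOrder, eventually_atTop, Set.mem_add]
  refine exists_congr fun N => forall_congr' fun m => imp_congr_right fun _ => ⟨?_, ?_⟩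
  · rintro ⟨c, hc, hm⟩
    exact ⟨c 0, hc 0, c 1, hc 1, by simpa using hm⟩
  · rintro ⟨x, hx, y, hy, hm⟩
    exact ⟨![x, y], by simp [Fin.forall_fin_two, hx, hy], by simpa using hm⟩

/-- A set containing `0` that stays a nonbasis of order two after adjoining finitely many
elements. -/
def IsRobustNonbasis (B : Set ℕ) : Prop :=
  0 ∈ B ∧ ∀ S : Set ℕ, S.Finite → ¬ IsAsymptoticBasisOfOrder (B ∪ S) 2

theorem IsRobustNonbasis.union {B S : Set ℕ} (hB : IsRobustNonbasis B) (hS : S.Finite) :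
    IsRobustNonbasis (B ∪ S) :=
  ⟨Or.inl hB.1, fun T hT => by rw [Set.union_assoc]; exact hB.2 _ (hS.union hT)⟩

/-- `C` extends `B` only above `n`, its sumset contains everything strictly between `n` and `n'`
but not `n'`, and each `x ≤ n` outside `C` has `n' - x` in `C`. -/
structure IsExtension (B : Set ℕ) (n : ℕ) (C : Set ℕ) (n' : ℕ) : Prop where
  subset : B ⊆ C
  lt : n < n'
  mem_of_le : ∀ x ≤ n, x ∈ C → x ∈ B
  sub_mem : ∀ x ≤ n, x ∉ C → n' - x ∈ C
  notMem_add : n' ∉ C + C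
  mem_add : ∀ m, n < m → m < n' → m ∈ C + C

theorem IsRobustNonbasis.exists_isExtension {B : Set ℕ} (hB : IsRobustNonbasis B) (n : ℕ) :
    ∃ C n', IsRobustNonbasis C ∧ IsExtension B n C n' := by
  classical
  set T := B ∪ Set.Ioc n (2 * n)
  have hTr : IsRobustNonbasis T := hB.union (Set.finite_Ioc _ _)
  have hex : ∃ m, 2 * n < m ∧ m ∉ T + T := by
    by_contra! h
    refine hTr.2 ∅ Set.finite_empty ?_
    rw [Set.union_empty, isAsymptoticBasisOfOrder_two_iff]
    exact ⟨2 * n + 1, fun m hm => h m hm⟩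
  obtain ⟨hlt, hnot⟩ := Nat.find_spec hex
  have hmin : ∀ m < Nat.find hex, 2 * n < m → m ∈ T + T := fun m hm hm' => by
    by_contra h
    exact Nat.find_min hex hm ⟨hm', h⟩
  generalize Nat.find hex = n' at hlt hnot hmin
  set U : Set ℕ := Set.image (fun x => n' - x) {x | x ≤ n ∧ x ∉ T}
  have hUfin : U.Finite := ((Set.finite_Iic n).subset fun x hx => hx.1).image _
  have hTU : T ⊆ T ∪ U := Set.subset_union_left
  refine ⟨T ∪ U, n', hTr.union hUfin, Set.subset_union_left.trans hTU, by omega, ?_, ?_, ?_, ?_⟩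
  · rintro x hx ((h | h) | ⟨y, ⟨hy, -⟩, rfl⟩)
    · exact h
    · exact absurd h.1 (by omega)
    · dsimp only at hx
      omega
  · intro x hx h
    exact Or.inr ⟨x, ⟨hx, fun h' => h (Or.inl h')⟩, rfl⟩
  · rintro ⟨x, hx | ⟨a, ⟨ha, haT⟩, rfl⟩, y, hy | ⟨b, ⟨hb, hbT⟩, rfl⟩, hxy⟩
    · exact hnot ⟨x, hx, y, hy, hxy⟩
    · dsimp only at hxy
      exact hbT ((show x = b by omega) ▸ hx)
    · dsimp only at hxy
      exact haT ((show y = a by omega) ▸ hy)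
    · dsimp only at hxy
      omega
  · intro m hm hm'
    rcases le_or_gt m (2 * n) with h | h
    · exact ⟨m, hTU (Or.inr ⟨hm, h⟩), 0, hTU hTr.1, rfl⟩
    · exact Set.add_subset_add hTU hTU (hmin m hm' h)

theorem isMaximalAsymptoticNonbasisOfOrder_iUnion {B : ℕ → Set ℕ} {n : ℕ → ℕ}
    (h : ∀ k, IsExtension (B k) (n k) (B (k + 1)) (n (k + 1))) :
    IsMaximalAsymptoticNonbasisOfOrder (⋃ k, B k) 2 := by
  have hmono : Monotone B := monotone_nat_of_le_succ fun k => (h k).subset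
  have hn : StrictMono n := strictMono_nat_of_lt_succ fun k => (h k).lt
  have hsub : ∀ k, B k ⊆ ⋃ k, B k := fun k => Set.subset_iUnion B k
  have hstable : ∀ k, ∀ x ≤ n k, x ∈ ⋃ k, B k → x ∈ B k := by
    intro k x hx hxM
    obtain ⟨j, hj⟩ := Set.mem_iUnion.1 hxM
    have hdown : ∀ d, x ∈ B (k + d) → x ∈ B k := by
      intro d
      induction d with
      | zero => exact id
      | succ d ih =>
        exact fun hd => ih ((h (k + d)).mem_of_le x (hx.trans (hn.monotone (by omega))) hd)
    exact hdown j (hmono (Nat.le_add_left j k) hj)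
  constructor
  · rw [isAsymptoticBasisOfOrder_two_iff]
    rintro ⟨N, hN⟩
    obtain ⟨x, hx, y, hy, hxy⟩ := hN (n (N + 1)) ((Nat.le_succ N).trans (hn.id_le _))
    dsimp only at hxy
    exact (h N).notMem_add
      ⟨x, hstable _ x (by omega) hx, y, hstable _ y (by omega) hy, hxy⟩
  · intro b hb
    rw [isAsymptoticBasisOfOrder_two_iff]
    refine ⟨n b + 1, fun m hm => ?_⟩
    have hex : ∃ k, m ≤ n k := ⟨m, hn.id_le m⟩
    obtain ⟨k, hbk, hkm, hmk⟩ : ∃ k, b ≤ k ∧ n k < m ∧ m ≤ n (k + 1) := by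
      have hspec := Nat.find_spec hex
      have hmin : ∀ j < Nat.find hex, ¬ m ≤ n j := fun j => Nat.find_min hex
      generalize Nat.find hex = l at hspec hmin
      have hbl : b < l := hn.lt_iff_lt.1 (by omega)
      obtain ⟨k, rfl⟩ : ∃ k, l = k + 1 := ⟨l - 1, by omega⟩
      exact ⟨k, by omega, not_le.1 (hmin k (by omega)), hspec⟩
    rcases hmk.lt_or_eq with hlt | rfl
    · have hss : B (k + 1) ⊆ (⋃ k, B k) ∪ {b} := (hsub _).trans Set.subset_union_left
      exact Set.add_subset_add hss hss ((h k).mem_add m hkm hlt)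
    · have hbn : b ≤ n k := hbk.trans (hn.id_le k)
      refine ⟨b, Or.inr rfl, n (k + 1) - b, Or.inl (hsub (k + 1) ?_), ?_⟩
      · exact (h k).sub_mem b hbn fun h' => hb (hsub _ h')
      · dsimp only
        omega

theorem contained_in_maximal_nonbasis (A : Set ℕ)
    (hA : ∀ S : Set ℕ, S.Finite → Disjoint S A →
      ¬ IsAsymptoticBasisOfOrder (A ∪ S) 2) :
    ∃ M : Set ℕ, A ⊆ M ∧ IsMaximalAsymptoticNonbasisOfOrder M 2 := by
  have hrobust : IsRobustNonbasis (A ∪ {0}) := by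
    refine ⟨Or.inr rfl, fun S hS => ?_⟩
    rw [Set.union_assoc, ← Set.union_sdiff_self]
    exact hA _ (((Set.finite_singleton 0).union hS).subset Set.sdiff_subset)
      Set.disjoint_sdiff_left
  choose! C n' hC hext using fun (B : Set ℕ) (hB : IsRobustNonbasis B) (n : ℕ) =>
    hB.exists_isExtension n
  let p : ℕ → Set ℕ × ℕ := fun k => (fun q => (C q.1 q.2, n' q.1 q.2))^[k] (A ∪ {0}, 0)
  have hp : ∀ k, p (k + 1) = (C (p k).1 (p k).2, n' (p k).1 (p k).2) := fun k =>
    Function.iterate_succ_apply' _ _ _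
  have hr : ∀ k, IsRobustNonbasis (p k).1 := by
    intro k
    induction k with
    | zero => exact hrobust
    | succ k ih => rw [hp]; exact hC _ ih _
  refine ⟨⋃ k, (p k).1, ?_, isMaximalAsymptoticNonbasisOfOrder_iUnion
    (n := fun k => (p k).2) fun k => ?_⟩
  · exact Set.subset_union_left.trans (Set.subset_iUnion (fun k => (p k).1) 0)
  · rw [hp]
    exact hext _ (hr k) _
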